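/- For all indices i,j,l ∈ {1,…,7} and every vector α ∈ ℝ⁷: Σ_{σ∈S₇} sgn(σ) φ_{i σ(1) σ(2)} φ_{j σ(3) σ(4)} φ_{l σ(5) σ(6)} α_{σ(7)} = −16 (δ_{ij} α_l + δ_{il} α_j + δ_{jl} α_i). (This is the coordinate form of the identity ∗((u⌐φ)∧(v⌐φ)∧(w⌐φ)) = −2 g(u,v) w♭ − 2 g(u,w) v♭ − 2 g(v,w) u♭ for the standard G₂-structure.) -/

import Mathlib

open Finset

noncomputable section

def phi0 : Fin 7 → Fin 7 → Fin 7 → ℝ := fun i j k =>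
  if (i, j, k) = (0, 1, 2) then -1
  else if (i, j, k) = (0, 3, 4) then -1
  else if (i, j, k) = (0, 5, 6) then -1
  else if (i, j, k) = (1, 3, 5) then -1
  else if (i, j, k) = (1, 4, 6) then 1
  else if (i, j, k) = (2, 3, 6) then 1
  else if (i, j, k) = (2, 4, 5) then 1
  else 0

/-- The standard G₂ 3-form on ℝ⁷ (paper's orientation convention), as a totally
antisymmetric array with `φ₁₂₃ = φ₁₄₅ = φ₁₆₇ = φ₂₄₆ = −1`, `φ₂₅₇ = φ₃₄₇ = φ₃₅₆ = 1`
(indices shifted to start at 0). -/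
def phi (i j k : Fin 7) : ℝ :=
  ∑ σ : Equiv.Perm (Fin 3),
    ((Equiv.Perm.sign σ : ℤ) : ℝ) *
      phi0 (![i, j, k] (σ 0)) (![i, j, k] (σ 1)) (![i, j, k] (σ 2))

def psi0 : Fin 7 → Fin 7 → Fin 7 → Fin 7 → ℝ := fun i j k l =>
  if (i, j, k, l) = (0, 1, 3, 6) then 1
  else if (i, j, k, l) = (0, 1, 4, 5) then 1
  else if (i, j, k, l) = (0, 2, 3, 5) then 1
  else if (i, j, k, l) = (0, 2, 4, 6) then -1
  else if (i, j, k, l) = (1, 2, 3, 4) then -1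
  else if (i, j, k, l) = (1, 2, 5, 6) then -1
  else if (i, j, k, l) = (3, 4, 5, 6) then -1
  else 0

/-- The dual 4-form ψ = ∗φ of the standard G₂-structure, as a totally antisymmetric
array with `ψ₁₂₄₇ = ψ₁₂₅₆ = ψ₁₃₄₆ = 1`, `ψ₁₃₅₇ = ψ₂₃₄₅ = ψ₂₃₆₇ = ψ₄₅₆₇ = −1`
(indices shifted to start at 0). -/
def psi (i j k l : Fin 7) : ℝ :=
  ∑ σ : Equiv.Perm (Fin 4),
    ((Equiv.Perm.sign σ : ℤ) : ℝ) *
      psi0 (![i, j, k, l] (σ 0)) (![i, j, k, l] (σ 1)) (![i, j, k, l] (σ 2))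
        (![i, j, k, l] (σ 3))

/-- Kronecker delta. -/
def kdelta (i j : Fin 7) : ℝ := if i = j then 1 else 0

/-- The G₂ cross product on ℝ⁷: `(u × v)_k = Σ_{i,j} φ_{ijk} u_i v_j`. -/
def cross (u v : Fin 7 → ℝ) : Fin 7 → ℝ := fun k =>
  ∑ i, ∑ j, phi i j k * u i * v j

/-- Euclidean inner product on ℝ⁷. -/
def dot (u v : Fin 7 → ℝ) : ℝ := ∑ i, u i * v i

end

/-!
Write `ωᵢ = eᵢ ⌟ φ`. Two facts about `φ` are needed: the symmetrized contraction
`∑ₘ (φᵢⱼₘ φₖₗₘ + φₖⱼₘ φᵢₗₘ)` is an expression in Kronecker deltas (the cross product is compatible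
with the metric), and the components of `∗φ` are those of `-∑ₘ φᵢⱼₘ φₖₗₘ` on distinct indices.
Together they make `∗(ωᵢ ∧ φ)` a multiple of `ωᵢ`, hence `ωᵢ ∧ ωⱼ ∧ φ` a multiple of `δᵢⱼ vol`.
Contracting this top form with `eₗ` gives

  `(eₗ ⌟ ωᵢ) ∧ ωⱼ ∧ φ + ωᵢ ∧ (eₗ ⌟ ωⱼ) ∧ φ + ωᵢ ∧ ωⱼ ∧ ωₗ`,

whose last term, wedged with `α`, is the wanted sum, while the first two are again contractions
of two copies of `φ`.
-/

open Equiv Equiv.Perm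

section SignedSums

variable {R : Type*} [CommRing R] {ι : Type*} [DecidableEq ι]

theorem update_mul_swap_inv_apply (σ : Perm ι) (k l : ι) :
    Function.update (σ * swap k (σ⁻¹ l)) (σ⁻¹ l) l = Function.update σ k l := by
  ext x
  rcases eq_or_ne x k with rfl | hxk <;> rcases eq_or_ne x (σ⁻¹ l) with rfl | hxl <;>
    simp_all [swap_apply_of_ne_of_ne]

variable [Fintype ι]

theorem sum_sign_mul_comp_mul_right (τ : Perm ι) (f : Perm ι → R) :
    ∑ σ, ((sign σ : ℤ) : R) * f (σ * τ) = ((sign τ : ℤ) : R) * ∑ σ, ((sign σ : ℤ) : R) * f σ := by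
  rw [← Equiv.sum_comp (Equiv.mulRight τ) (fun σ => ((sign σ : ℤ) : R) * f σ), mul_sum]
  refine sum_congr rfl fun σ _ => ?_
  rcases Int.units_eq_one_or (sign τ) with hτ | hτ <;> simp [hτ]

-- Once `l` is written at a place `k` with `σ k ≠ l` it occurs twice in the word, and exchanging
-- those two places cancels the term; only the words with `σ k = l` survive.
theorem sum_sign_mul_update (F : (ι → ι) → R) (α : ι → R) (l : ι) :
    ∑ k, ∑ σ : Perm ι, ((sign σ : ℤ) : R) * (α (σ k) * F (Function.update σ k l)) =
      α l * ∑ σ : Perm ι, ((sign σ : ℤ) : R) * F σ := by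
  let term (p : Perm ι × ι) : R :=
    ((sign p.1 : ℤ) : R) * (α (p.1 p.2) * F (Function.update p.1 p.2 l))
  have diagonal (σ : Perm ι) : term (σ, σ⁻¹ l) = α l * (((sign σ : ℤ) : R) * F σ) := by
    have : Function.update σ (σ⁻¹ l) l = σ := by simp
    simp only [term, this, ← Perm.mul_apply, mul_inv_cancel, Perm.one_apply]
    ring
  have off_diagonal : ∑ p with p.2 ≠ p.1⁻¹ l, term p = 0 := by
    let exchange (p : Perm ι × ι) : Perm ι × ι := (p.1 * swap p.2 (p.1⁻¹ l), p.1⁻¹ l)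
    have inv_exchange (p : Perm ι × ι) : (exchange p).1⁻¹ l = p.2 := by
      rw [mul_inv_rev, swap_inv, Perm.mul_apply, swap_apply_right]
    refine sum_involution (fun p _ => exchange p) (fun p hp => ?_) (fun p hp _ h => ?_)
      (fun p hp => ?_) (fun p _ => ?_)
    · simp only [term, exchange, update_mul_swap_inv_apply, Perm.sign_mul,
        sign_swap (mem_filter.mp hp).2, Perm.mul_apply, swap_apply_right]
      simp
    · exact (mem_filter.mp hp).2 (congrArg Prod.snd h).symm
    · rw [mem_filter, inv_exchange]
      exact ⟨mem_univ _, (mem_filter.mp hp).2.symm⟩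
    · refine Prod.ext ?_ (inv_exchange p)
      change (exchange p).1 * swap (exchange p).2 ((exchange p).1⁻¹ l) = p.1
      rw [inv_exchange, mul_assoc, swap_comm, swap_mul_self, mul_one]
  calc
    _ = ∑ p, term p := by rw [sum_comm, ← Fintype.sum_prod_type']
    _ = ∑ p with p.2 = p.1⁻¹ l, term p := by
      rw [← sum_filter_add_sum_filter_not _ (fun p : Perm ι × ι => p.2 = p.1⁻¹ l), off_diagonal,
        add_zero]
    _ = ∑ σ : Perm ι, α l * (((sign σ : ℤ) : R) * F σ) := by
      simp only [sum_filter, Fintype.sum_prod_type, sum_ite_eq', mem_univ, if_true, diagonal]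
    _ = _ := (mul_sum ..).symm

end SignedSums

theorem card_nsmul_sum_smul {G X M : Type*} [Group G] [Fintype G] [MulAction G X]
    [MulAction.IsPretransitive G X] [Fintype X] [AddCommMonoid M] (f : X → M) (x : X) :
    Fintype.card X • ∑ g : G, f (g • x) = Fintype.card G • ∑ y, f y := by
  have sum_eq (y : X) : ∑ g : G, f (g • y) = ∑ g : G, f (g • x) := by
    obtain ⟨h, rfl⟩ := MulAction.exists_smul_eq G x y
    simp only [smul_smul]
    exact Equiv.sum_comp (Equiv.mulRight h) fun g => f (g • x)
  calc
    Fintype.card X • ∑ g : G, f (g • x) = ∑ y : X, ∑ g : G, f (g • y) := by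
      simp only [sum_eq, sum_const, card_univ]
    _ = ∑ g : G, ∑ y, f (g • y) := sum_comm
    _ = ∑ _ : G, ∑ y, f y := sum_congr rfl fun g _ => Equiv.sum_comp (MulAction.toPerm g) f
    _ = Fintype.card G • ∑ y, f y := by rw [sum_const, card_univ]

theorem sum_perm_comp_embedding {M ι : Type*} [AddCommMonoid M] [IsAddTorsionFree M] [Fintype ι]
    [DecidableEq ι] {k : ℕ} (e : Fin k ↪ ι) (f : (Fin k → ι) → M)
    (hf : ∀ v, ¬ Function.Injective v → f v = 0) :
    ∑ σ : Perm ι, f (σ ∘ e) = (Fintype.card ι - k).factorial • ∑ v, f v := by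
  have sum_embedding : ∑ d : Fin k ↪ ι, f d = ∑ v, f v := by
    refine sum_of_injOn (fun d => d) DFunLike.coe_injective.injOn (by simp) (fun v _ hv => ?_)
      fun _ _ => rfl
    exact hf v fun hinj => hv ⟨⟨v, hinj⟩, by simp⟩
  have hk : k ≤ Fintype.card ι := by simpa using Fintype.card_le_of_embedding e
  have := isMultiplyPretransitive ι k
  have key := card_nsmul_sum_smul (G := Perm ι) (fun d : Fin k ↪ ι => f d) e
  rw [sum_embedding, Fintype.card_perm, Fintype.card_embedding_eq, Fintype.card_fin,
    ← Nat.factorial_mul_descFactorial hk, mul_comm, mul_nsmul'] at key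
  exact nsmul_right_injective (Nat.descFactorial_pos.mpr hk).ne' key

theorem sum_fin_succ_pi {M ι : Type*} [AddCommMonoid M] [Fintype ι] {n : ℕ}
    (f : (Fin (n + 1) → ι) → M) : ∑ v, f v = ∑ a, ∑ w : Fin n → ι, f (Fin.cons a w) := by
  rw [← Equiv.sum_comp (Fin.consEquiv fun _ => ι), Fintype.sum_prod_type]
  rfl

/-- The index of the basis vector `± eᵢ × eⱼ`, where `×` is the `G₂` cross product. Counting
indices from 1, three of them form a component of `φ` exactly when their bitwise exclusive or
vanishes; at `i = j` the value is junk. -/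
def crossIndex (i j : Fin 7) : Fin 7 :=
  Fin.ofNat 7 (((i.val + 1) ^^^ (j.val + 1)) - 1)

/-- The sign of `eᵢ × eⱼ` relative to the basis vector with index `crossIndex i j`, and `0` for
`i = j`. -/
def crossSign : Fin 7 → Fin 7 → ℤ :=
  ![![0, -1, 1, -1, 1, -1, 1],
    ![1, 0, -1, -1, 1, 1, -1],
    ![-1, 1, 0, 1, 1, -1, -1],
    ![1, 1, -1, 0, -1, -1, 1],
    ![-1, -1, -1, 1, 0, 1, 1],
    ![1, -1, 1, 1, -1, 0, -1],
    ![-1, 1, 1, -1, -1, 1, 0]]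

/-- The components of `φ` as integers, in a form that the kernel evaluates quickly. -/
def phiInt (i j k : Fin 7) : ℤ :=
  if k = crossIndex i j then crossSign i j else 0

theorem phi0_eq_intCast (i j k : Fin 7) :
    phi0 i j k = ((if i < j ∧ j < k then phiInt i j k else 0 : ℤ) : ℝ) := by
  unfold phi0
  norm_cast
  revert i j k
  decide +kernel

theorem phi_eq_intCast (i j k : Fin 7) : phi i j k = (phiInt i j k : ℝ) := by
  simp only [phi, phi0_eq_intCast]
  norm_cast
  revert i j k
  decide +kernel

theorem kdelta_eq_intCast (i j : Fin 7) : kdelta i j = ((if i = j then 1 else 0 : ℤ) : ℝ) := by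
  unfold kdelta
  norm_cast

theorem phi_swap_left (i j k : Fin 7) : phi j i k = -phi i j k := by
  simp only [phi_eq_intCast]
  norm_cast
  revert i j k
  decide +kernel

theorem phi_swap_right (i j k : Fin 7) : phi i k j = -phi i j k := by
  simp only [phi_eq_intCast]
  norm_cast
  revert i j k
  decide +kernel

theorem phi_rotate (i j k : Fin 7) : phi j k i = phi i j k := by
  rw [phi_swap_right, phi_swap_left, neg_neg]

theorem sum_phiInt_mul_phiInt (i j k l : Fin 7) :
    ∑ m, phiInt i j m * phiInt k l m =
      if crossIndex i j = crossIndex k l then crossSign i j * crossSign k l else 0 := by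
  simp only [phiInt, ite_mul, zero_mul, sum_ite_eq', mem_univ, if_true, mul_ite, mul_zero,
    @eq_comm _ (crossIndex k l)]

theorem sum_phi_mul_phi_symm (i j k l : Fin 7) :
    ∑ m, (phi i j m * phi k l m + phi k j m * phi i l m) =
      2 * (kdelta i k * kdelta j l) - kdelta i l * kdelta j k - kdelta i j * kdelta k l := by
  simp only [phi_eq_intCast, kdelta_eq_intCast]
  norm_cast
  rw [sum_add_distrib, sum_phiInt_mul_phiInt, sum_phiInt_mul_phiInt]
  revert i j k l
  decide +kernel

theorem kdelta_self (i : Fin 7) : kdelta i i = 1 := if_pos rfl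

theorem kdelta_comm (i j : Fin 7) : kdelta i j = kdelta j i := by
  simp only [kdelta, eq_comm]

theorem sum_kdelta_mul (i : Fin 7) (f : Fin 7 → ℝ) : ∑ j, kdelta i j * f j = f i := by
  simp only [kdelta, ite_mul, one_mul, zero_mul, sum_ite_eq, mem_univ, if_true]

theorem sum_phi_mul_phi_self (i j : Fin 7) :
    ∑ a, ∑ b, phi i a b * phi j a b = 6 * kdelta i j := by
  have doubled : ∑ a, ∑ b, (phi i a b * phi j a b + phi j a b * phi i a b) = 12 * kdelta i j := by
    simp only [sum_phi_mul_phi_symm, kdelta_self, sum_sub_distrib, sum_kdelta_mul, sum_const,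
      card_univ, Fintype.card_fin, kdelta_comm j i, nsmul_eq_mul]
    ring
  simp only [sum_add_distrib, mul_comm (phi j _ _)] at doubled
  linarith

theorem sum_mul_sum_phi_mul_phi_symm (i j l : Fin 7) (α : Fin 7 → ℝ) :
    ∑ c, α c * ∑ d, phi i c d * phi j l d + ∑ c, α c * ∑ d, phi j c d * phi i l d =
      2 * (kdelta i j * α l) - kdelta i l * α j - kdelta j l * α i := by
  simp only [← sum_add_distrib, ← mul_add, sum_phi_mul_phi_symm]
  simp only [kdelta, mul_sub, mul_ite, mul_one, mul_zero, ite_mul, one_mul, zero_mul,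
    sum_sub_distrib, sum_ite_irrel, sum_const_zero, sum_ite_eq, sum_ite_eq', mem_univ, if_true]
  split_ifs <;> ring

/-- The dual 4-form `∗φ`, defined through its relation to the contraction of two copies of `φ`:
unlike with the table `psi`, traces against `φ` then reduce to traces of products of `φ`. -/
noncomputable def dualForm (i j k l : Fin 7) : ℝ :=
  kdelta i k * kdelta j l - kdelta i l * kdelta j k - ∑ m, phi i j m * phi k l m

theorem dualForm_swap_zero_one (i j k l : Fin 7) : dualForm j i k l = -dualForm i j k l := by
  simp only [dualForm, phi_swap_left i j, neg_mul, sum_neg_distrib]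
  ring

theorem dualForm_swap_two_three (i j k l : Fin 7) : dualForm i j l k = -dualForm i j k l := by
  simp only [dualForm, phi_swap_left k l, mul_neg, sum_neg_distrib]
  ring

theorem dualForm_swap_zero_two (i j k l : Fin 7) : dualForm k j i l = -dualForm i j k l := by
  have symm := sum_phi_mul_phi_symm i j k l
  rw [sum_add_distrib] at symm
  rw [dualForm, dualForm, kdelta_comm k i, kdelta_comm j i]
  linarith

theorem dualForm_eq_zero_of_not_injective (v : Fin 4 → Fin 7) (hv : ¬ Function.Injective v) :
    dualForm (v 0) (v 1) (v 2) (v 3) = 0 := by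
  have eq_zero_one (i k l) : dualForm i i k l = 0 := by linarith [dualForm_swap_zero_one i i k l]
  have eq_two_three (i j k) : dualForm i j k k = 0 := by linarith [dualForm_swap_two_three i j k k]
  have eq_zero_two (i j l) : dualForm i j i l = 0 := by linarith [dualForm_swap_zero_two i j i l]
  have eq_zero_three (i j k) : dualForm i j k i = 0 := by
    rw [dualForm_swap_two_three, eq_zero_two, neg_zero]
  have eq_one_two (i j l) : dualForm i j j l = 0 := by
    rw [dualForm_swap_zero_one, eq_zero_two, neg_zero]
  have eq_one_three (i j k) : dualForm i j k j = 0 := by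
    rw [dualForm_swap_two_three, eq_one_two, neg_zero]
  simp only [Function.Injective, not_forall] at hv
  obtain ⟨a, b, hab, hne⟩ := hv
  fin_cases a <;> fin_cases b <;> simp_all

theorem sum_phi_mul_dualForm (i k l : Fin 7) :
    ∑ a, ∑ b, phi i a b * dualForm a b k l = -4 * phi i k l := by
  have delta_part : ∑ a, ∑ b, phi i a b * (kdelta a k * kdelta b l - kdelta a l * kdelta b k) =
      2 * phi i k l := by
    simp only [kdelta, mul_sub, mul_ite, mul_one, mul_zero, sum_sub_distrib, sum_ite_eq', mem_univ,
      if_true, phi_swap_right i k l]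
    ring
  have phi_part : ∑ a, ∑ b, phi i a b * ∑ m, phi a b m * phi k l m = 6 * phi i k l := by
    calc
      _ = ∑ m, (∑ a, ∑ b, phi i a b * phi m a b) * phi k l m := by
        simp only [mul_sum, sum_mul, ← mul_assoc]
        rw [sum_comm_cycle]
        simp only [phi_rotate]
      _ = ∑ m, kdelta i m * (6 * phi k l m) := by
        simp only [sum_phi_mul_phi_self]
        exact sum_congr rfl fun m _ => by ring
      _ = 6 * phi i k l := by rw [sum_kdelta_mul, phi_rotate]
  simp only [dualForm, mul_sub _ _ (∑ _, _), sum_sub_distrib, delta_part, phi_part]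
  ring

/-- The sign of a word, computed by counting inversions. Unlike `Equiv.Perm.sign` it evaluates
quickly in the kernel. -/
def inversionSign {α : Type*} [LinearOrder α] : List α → ℤ
  | [] => 1
  | a :: t => (t.map fun b => if a < b then 1 else -1).prod * inversionSign t

theorem inversionSign_ofFn {α : Type*} [LinearOrder α] {n : ℕ} (v : Fin n → α) :
    inversionSign (List.ofFn v) = ∏ i, ∏ j > i, if v i < v j then 1 else -1 := by
  induction n with
  | zero => simp [inversionSign]
  | succ n ih =>
    rw [List.ofFn_succ, inversionSign, ih, Fin.prod_univ_succ, List.map_ofFn, List.prod_ofFn]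
    simp only [Fin.prod_Ioi_zero, Fin.prod_Ioi_succ, Function.comp_apply]

theorem sign_eq_inversionSign_ofFn {n : ℕ} (σ : Perm (Fin n)) :
    (sign σ : ℤ) = inversionSign (List.ofFn σ) := by
  rw [inversionSign_ofFn, sign_eq_prod_prod_Ioi]
  simp only [Units.coe_prod, apply_ite Units.val, Units.val_one, Units.val_neg]

-- The exclusions and the condition on `crossIndex` leave `168 * 6` of the `7 ^ 7` words to check.
theorem inversionSign_mul_phiInt : ∀ a : Fin 7, ∀ b ∉ [a], ∀ c ∉ [a, b], ∀ d ∉ [a, b, c],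
    crossIndex a b = crossIndex c d →
      ∀ e ∉ [a, b, c, d], ∀ f ∉ [a, b, c, d, e], ∀ g ∉ [a, b, c, d, e, f],
        inversionSign [a, b, c, d, e, f, g] * phiInt e f g =
          -(crossSign a b * crossSign c d) := by
  decide +kernel

theorem crossIndex_eq_of_disjoint : ∀ e : Fin 7, ∀ f ∉ [e], ∀ a ∉ [e, f, crossIndex e f],
    ∀ b ∉ [e, f, crossIndex e f, a], ∀ c ∉ [e, f, crossIndex e f, a, b],
      ∀ d ∉ [e, f, crossIndex e f, a, b, c], crossIndex a b = crossIndex c d := by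
  decide +kernel

theorem sign_mul_phi (σ : Perm (Fin 7)) :
    ((sign σ : ℤ) : ℝ) * phi (σ 4) (σ 5) (σ 6) = dualForm (σ 0) (σ 1) (σ 2) (σ 3) := by
  have no_delta : dualForm (σ 0) (σ 1) (σ 2) (σ 3) =
      -∑ m, phi (σ 0) (σ 1) m * phi (σ 2) (σ 3) m := by
    simp [dualForm, kdelta]
  simp only [no_delta, phi_eq_intCast, sign_eq_inversionSign_ofFn]
  norm_cast
  rw [sum_phiInt_mul_phiInt]
  by_cases habcd : crossIndex (σ 0) (σ 1) = crossIndex (σ 2) (σ 3)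
  · rw [if_pos habcd]
    apply inversionSign_mul_phiInt _ _ _ _ _ _ _ habcd <;> simp
  · have hefg : σ 6 ≠ crossIndex (σ 4) (σ 5) := by
      intro hefg
      apply habcd
      apply crossIndex_eq_of_disjoint (σ 4) (σ 5) <;> simp [← hefg]
    rw [if_neg habcd, phiInt, if_neg hefg, mul_zero, neg_zero]

theorem sum_sign_mul_phi_mul_mul_phi (i : Fin 7) (H : Fin 7 → Fin 7 → ℝ) :
    ∑ σ : Perm (Fin 7), ((sign σ : ℤ) : ℝ) *
        (phi i (σ 0) (σ 1) * H (σ 2) (σ 3) * phi (σ 4) (σ 5) (σ 6)) =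
      -24 * ∑ c, ∑ d, phi i c d * H c d := by
  let f (v : Fin 4 → Fin 7) : ℝ :=
    phi i (v 0) (v 1) * H (v 2) (v 3) * dualForm (v 0) (v 1) (v 2) (v 3)
  have sum_words : ∑ v, f v = ∑ c, ∑ d, (∑ a, ∑ b, phi i a b * dualForm a b c d) * H c d := by
    simp only [sum_fin_succ_pi, univ_unique, sum_singleton, sum_mul]
    rw [sum_comm_cycle]
    refine sum_congr rfl fun c _ => ?_
    rw [sum_comm_cycle]
    refine sum_congr rfl fun d _ => sum_congr rfl fun a _ => sum_congr rfl fun b _ => ?_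
    exact mul_right_comm _ _ _
  calc
    _ = ∑ σ : Perm (Fin 7), f (σ ∘ Fin.castLEEmb (by decide : 4 ≤ 7)) := by
      refine sum_congr rfl fun σ _ => ?_
      change _ = phi i (σ 0) (σ 1) * H (σ 2) (σ 3) * dualForm (σ 0) (σ 1) (σ 2) (σ 3)
      rw [← sign_mul_phi]
      ring
    _ = 6 * ∑ v, f v := by
      rw [sum_perm_comp_embedding _ f fun v hv => by
        simp only [f, dualForm_eq_zero_of_not_injective v hv, mul_zero]]
      simp [Nat.factorial]
    _ = _ := by
      simp only [sum_words, sum_phi_mul_dualForm, mul_assoc, ← mul_sum]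
      ring

theorem sum_sign_mul_phi_mul_phi_mul_phi (i j : Fin 7) :
    ∑ σ : Perm (Fin 7), ((sign σ : ℤ) : ℝ) *
        (phi i (σ 0) (σ 1) * phi j (σ 2) (σ 3) * phi (σ 4) (σ 5) (σ 6)) = -144 * kdelta i j := by
  rw [sum_sign_mul_phi_mul_mul_phi, sum_phi_mul_phi_self]
  ring

theorem sum_sign_mul_mul_phi_mul_phi (j : Fin 7) (H : Fin 7 → Fin 7 → ℝ) :
    ∑ σ : Perm (Fin 7), ((sign σ : ℤ) : ℝ) *
        (H (σ 0) (σ 1) * phi j (σ 2) (σ 3) * phi (σ 4) (σ 5) (σ 6)) =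
      -24 * ∑ c, ∑ d, phi j c d * H c d := by
  have exchange := sum_sign_mul_comp_mul_right (swap 0 2 * swap 1 3) fun σ : Perm (Fin 7) =>
    phi j (σ 0) (σ 1) * H (σ 2) (σ 3) * phi (σ 4) (σ 5) (σ 6)
  rw [sum_sign_mul_phi_mul_mul_phi] at exchange
  simpa [swap_apply_of_ne_of_ne, mul_comm (phi j _ _)] using exchange

theorem sum_phi_mul_update_slots (i j l : Fin 7) (α : Fin 7 → ℝ) :
    ∑ c, ∑ d, phi i c d * (α c * phi j l d) + ∑ c, ∑ d, phi i c d * (α d * phi j c l) =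
      2 * ∑ c, α c * ∑ d, phi i c d * phi j l d := by
  have second_slot : ∑ c, ∑ d, phi i c d * (α d * phi j c l) =
      ∑ c, ∑ d, phi i c d * (α c * phi j l d) := by
    rw [sum_comm]
    refine sum_congr rfl fun c _ => sum_congr rfl fun d _ => ?_
    rw [phi_swap_right i c d, phi_swap_right j l d]
    ring
  rw [second_slot, ← two_mul]
  simp only [mul_left_comm (phi i _ _), ← mul_sum]

theorem sum_sign_mul_update_slots_zero_one (i j l : Fin 7) (α : Fin 7 → ℝ) :
    ∑ σ : Perm (Fin 7), ((sign σ : ℤ) : ℝ) *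
        (α (σ 0) * (phi i l (σ 1) * phi j (σ 2) (σ 3) * phi (σ 4) (σ 5) (σ 6))) +
      ∑ σ : Perm (Fin 7), ((sign σ : ℤ) : ℝ) *
        (α (σ 1) * (phi i (σ 0) l * phi j (σ 2) (σ 3) * phi (σ 4) (σ 5) (σ 6))) =
      -48 * ∑ c, α c * ∑ d, phi j c d * phi i l d := by
  simp only [← mul_assoc (α _)]
  rw [sum_sign_mul_mul_phi_mul_phi j fun c d => α c * phi i l d,
    sum_sign_mul_mul_phi_mul_phi j fun c d => α d * phi i c l]
  linarith [sum_phi_mul_update_slots j i l α]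

theorem sum_sign_mul_update_slots_two_three (i j l : Fin 7) (α : Fin 7 → ℝ) :
    ∑ σ : Perm (Fin 7), ((sign σ : ℤ) : ℝ) *
        (α (σ 2) * (phi i (σ 0) (σ 1) * phi j l (σ 3) * phi (σ 4) (σ 5) (σ 6))) +
      ∑ σ : Perm (Fin 7), ((sign σ : ℤ) : ℝ) *
        (α (σ 3) * (phi i (σ 0) (σ 1) * phi j (σ 2) l * phi (σ 4) (σ 5) (σ 6))) =
      -48 * ∑ c, α c * ∑ d, phi i c d * phi j l d := by
  simp only [← mul_assoc (α _), mul_comm (α _) (phi i _ _), mul_assoc (phi i _ _) (α _)]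
  rw [sum_sign_mul_phi_mul_mul_phi i fun c d => α c * phi j l d,
    sum_sign_mul_phi_mul_mul_phi i fun c d => α d * phi j c l]
  linarith [sum_phi_mul_update_slots i j l α]

theorem sum_sign_mul_update_slots_four_five_six (P : Fin 7 → Fin 7 → Fin 7 → Fin 7 → ℝ) (l : Fin 7)
    (α : Fin 7 → ℝ) :
    ∑ σ : Perm (Fin 7), ((sign σ : ℤ) : ℝ) *
        (α (σ 4) * (P (σ 0) (σ 1) (σ 2) (σ 3) * phi l (σ 5) (σ 6))) +
      ∑ σ : Perm (Fin 7), ((sign σ : ℤ) : ℝ) *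
        (α (σ 5) * (P (σ 0) (σ 1) (σ 2) (σ 3) * phi (σ 4) l (σ 6))) +
      ∑ σ : Perm (Fin 7), ((sign σ : ℤ) : ℝ) *
        (α (σ 6) * (P (σ 0) (σ 1) (σ 2) (σ 3) * phi (σ 4) (σ 5) l)) =
      3 * ∑ σ : Perm (Fin 7), ((sign σ : ℤ) : ℝ) *
        (P (σ 0) (σ 1) (σ 2) (σ 3) * phi l (σ 4) (σ 5) * α (σ 6)) := by
  have reindex (τ : Perm (Fin 7)) := sum_sign_mul_comp_mul_right τ fun σ : Perm (Fin 7) =>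
    P (σ 0) (σ 1) (σ 2) (σ 3) * phi l (σ 4) (σ 5) * α (σ 6)
  have slot_four := reindex (swap 4 5 * swap 5 6)
  have slot_five := reindex (swap 5 6)
  simp only [Perm.coe_mul, Function.comp_apply, ne_eq, Fin.reduceEq, not_false_eq_true,
    swap_apply_of_ne_of_ne, swap_apply_left, swap_apply_right, Perm.sign_mul, sign_swap',
    if_false, mul_neg, mul_one, neg_neg, Units.val_one, Units.val_neg, Int.cast_neg, Int.cast_one,
    neg_mul, one_mul] at slot_four slot_five
  simp only [phi_swap_left l, phi_rotate l, mul_comm (α _), mul_neg, neg_mul, sum_neg_distrib,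
    slot_four, slot_five]
  ring

/-- Equation `wtwscubedeq` (coordinate form of Lemma `wtwscubedlemma`) for the
standard G₂-structure on ℝ⁷. -/
theorem wtws_cubed (i j l : Fin 7) (α : Fin 7 → ℝ) :
    ∑ σ : Equiv.Perm (Fin 7),
      ((Equiv.Perm.sign σ : ℤ) : ℝ) *
        (phi i (σ 0) (σ 1) * phi j (σ 2) (σ 3) * phi l (σ 4) (σ 5) * α (σ 6))
      = -16 * (kdelta i j * α l + kdelta i l * α j + kdelta j l * α i) := by
  have contraction := sum_sign_mul_update
    (fun v => phi i (v 0) (v 1) * phi j (v 2) (v 3) * phi (v 4) (v 5) (v 6)) α l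
  simp only [Fin.sum_univ_seven, Function.update_apply, Fin.reduceEq, if_true, if_false,
    sum_sign_mul_phi_mul_phi_mul_phi] at contraction
  have first_factor := sum_sign_mul_update_slots_zero_one i j l α
  have second_factor := sum_sign_mul_update_slots_two_three i j l α
  have last_factor :=
    sum_sign_mul_update_slots_four_five_six (fun a b c d => phi i a b * phi j c d) l α
  linarith [sum_mul_sum_phi_mul_phi_symm i j l α]
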